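/- Define a partial order on V by: x ≤ y iff x₊ = y₊ and w_x ≤ w_y in the Bruhat order of W_R, and for x ≤ y put [x,y] := {z ∈ V : x ≤ z ≤ y}; let Conv denote the convex hull in V. Then for all x, y ∈ V: (i) Conv [y₊, y] ⊆ Conv(W₀ y); (ii) if Conv [x₊, x] = Conv [y₊, y] then x = y; (iii) if x ∈ Conv [y₊, y] then Conv [x₊, x] ⊆ Conv [y₊, y]. -/

import Mathlib

open scoped RealInnerProductSpace BigOperators Classical

noncomputable section

/-- Alternating composition `A ∘ B ∘ A ∘ ⋯` with `m` factors (starting with `A`). -/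
def altComp {α : Type*} (A B : α → α) : ℕ → (α → α)
  | 0 => id
  | m + 1 => A ∘ altComp B A m

/-- The sign of a real number, as an integer (with `sgnZ 0 = 0`). -/
def sgnZ (x : ℝ) : ℤ := if 0 < x then 1 else if x < 0 then -1 else 0

/-- The function `v(x) = (1-t²)∫₀ˣ dy/(1-2t cos y+t²)`. -/
def mvfun (t x : ℝ) : ℝ :=
  (1 - t ^ 2) * ∫ y in (0:ℝ)..x, 1 / (1 - 2 * t * Real.cos y + t ^ 2)

section AffineOps

variable {V : Type*} [NormedAddCommGroup V] [InnerProductSpace ℝ V]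

/-- The coroot `α∨ = 2α/⟨α,α⟩`. -/
def coroot (α : V) : V := (2 / ⟪α, α⟫) • α

/-- The affine root `a = α∨ + r c` (encoded as the pair `(α, r)`), as an affine
function on `V`. -/
def aval (c : ℝ) (a : V × ℤ) (x : V) : ℝ := ⟪x, coroot a.1⟫ + a.2 * c

/-- The affine reflection `s_a(x) = x - a(x) α` attached to `a = α∨ + r c`. -/
def sAff (c : ℝ) (a : V × ℤ) (x : V) : V := x - aval c a x • a.1

/-- `w` maps the affine root `a` to the affine root `b`, i.e. `(wa)(x) = a(w⁻¹x) = b(x)`. -/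
def mapsRoot (c : ℝ) (w : Equiv.Perm V) (a b : V × ℤ) : Prop :=
  ∀ x : V, aval c a (w⁻¹ x) = aval c b x

/-- The linear part `w′` of an affine transformation `w`. -/
def linPart (w : Equiv.Perm V) (x : V) : V := w x - w 0

variable {R : Type*} [Field R]

/-- The difference-reflection operator `T̂_a`. -/
def hatT (c : ℝ) (τ : V × ℤ → R) (a : V × ℤ) (f : V → R) (x : V) : R :=
  if 0 < aval c a x then τ a * f (sAff c a x)
  else if aval c a x = 0 then τ a * f x
  else (τ a)⁻¹ * f (sAff c a x) + (τ a - (τ a)⁻¹) * f x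

/-- The discrete integral operator `J_a`. -/
def Jop (c : ℝ) (a : V × ℤ) (f : V → R) (x : V) : R :=
  if 0 < aval c a x then
    - ∑ k ∈ Finset.Icc (1 : ℤ) ⌊aval c a x⌋, f (x - k • a.1)
  else if aval c a x = 0 then 0
  else ∑ k ∈ Finset.Ico (0 : ℤ) (-⌊aval c a x⌋), f (x + k • a.1)

/-- The integral-reflection operator `I_a = τ_a s_a + (τ_a - τ_a⁻¹) J_a`. -/
def Iop (c : ℝ) (τ : V × ℤ → R) (a : V × ℤ) (f : V → R) (x : V) : R :=
  τ a * f (sAff c a x) + (τ a - (τ a)⁻¹) * Jop c a f x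

end AffineOps

/-- An irreducible reduced crystallographic root system spanning `V`, together with a
choice of positive roots, simple roots, and the highest short root. -/
structure RootSystemData (V : Type*) [NormedAddCommGroup V] [InnerProductSpace ℝ V] :
    Type _ where
  n : ℕ
  n_pos : 1 ≤ n
  rank_eq : Module.finrank ℝ V = n
  R0 : Finset V
  ne_zero : ∀ α ∈ R0, α ≠ (0 : V)
  span_top : Submodule.span ℝ (R0 : Set V) = ⊤
  reduced : ∀ α ∈ R0, ∀ t : ℝ, t • α ∈ R0 → t = 1 ∨ t = -1
  crystallographic : ∀ α ∈ R0, ∀ β ∈ R0, ∃ k : ℤ, ⟪β, coroot α⟫ = (k : ℝ)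
  reflect_mem : ∀ α ∈ R0, ∀ β ∈ R0, β - ⟪β, coroot α⟫ • α ∈ R0
  irreducible : ∀ S : Finset V, S ⊆ R0 →
      (∀ a ∈ S, ∀ b ∈ R0, b ∉ S → ⟪a, b⟫ = 0) → S = ∅ ∨ S = R0
  pos : Finset V
  pos_subset : pos ⊆ R0
  pos_or_neg : ∀ α ∈ R0, α ∈ pos ∨ -α ∈ pos
  pos_not_both : ∀ α ∈ pos, -α ∉ pos
  pos_add : ∀ α ∈ pos, ∀ β ∈ pos, α + β ∈ R0 → α + β ∈ pos
  simpleRoot : Fin n → V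
  simpleRoot_mem : ∀ j, simpleRoot j ∈ pos
  pos_natCombo : ∀ α ∈ pos, ∃ k : Fin n → ℕ, α = ∑ j, (k j : ℝ) • simpleRoot j
  hshort : V
  hshort_mem : hshort ∈ pos
  hshort_short : ∀ α ∈ R0, ‖hshort‖ ≤ ‖α‖
  hshort_highest : ∀ α ∈ R0, ‖α‖ = ‖hshort‖ →
      ∃ k : Fin n → ℕ, hshort - α = ∑ j, (k j : ℝ) • simpleRoot j

namespace RootSystemData

variable {V : Type*} [NormedAddCommGroup V] [InnerProductSpace ℝ V]
variable (D : RootSystemData V)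

/-- The weight lattice `P`. -/
def weightLattice : Set V :=
  {x : V | ∀ α ∈ D.R0, ∃ k : ℤ, ⟪x, coroot α⟫ = (k : ℝ)}

/-- The root lattice `Q`. -/
def rootLattice : Set V := (Submodule.span ℤ (D.R0 : Set V) : Set V)

/-- The coweight lattice `P∨`. -/
def coweightLattice : Set V :=
  {x : V | ∀ α ∈ D.R0, ∃ k : ℤ, ⟪x, α⟫ = (k : ℝ)}

/-- The dominant cone. -/
def dominant : Set V := {x : V | ∀ α ∈ D.pos, 0 ≤ ⟪x, coroot α⟫}

/-- `ω` is a minuscule (dominant) weight. -/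
def IsMinuscule (ω : V) : Prop :=
  ω ∈ D.weightLattice ∧ ω ∈ D.dominant ∧ ω ≠ 0 ∧
    ∀ α ∈ D.pos, ⟪ω, coroot α⟫ ≤ 1

/-- `ω` is the quasi-minuscule weight, i.e. the highest short root. -/
def IsQuasiMinuscule (ω : V) : Prop := ω = D.hshort

/-- The saturated set `P_ϑ` containing the (quasi-)minuscule weights. -/
def Ptheta : Set V :=
  {ν : V | ν ∈ D.weightLattice ∧ ∀ α ∈ D.R0, α ≠ ν → |⟪ν, coroot α⟫| ≤ 1}

/-- Half sum of the positive roots. -/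
def rhoHalf : V := (2⁻¹ : ℝ) • ∑ α ∈ D.pos, α

/-- Half sum of the positive coroots. -/
def rhoVee : V := (2⁻¹ : ℝ) • ∑ α ∈ D.pos, coroot α

/-- `(α, r)` encodes an affine root. -/
def IsAffRoot (a : V × ℤ) : Prop := a.1 ∈ D.R0

/-- `(α, r)` encodes a positive affine root. -/
def IsAffPos (a : V × ℤ) : Prop :=
  a.1 ∈ D.R0 ∧ (1 ≤ a.2 ∨ (a.2 = 0 ∧ a.1 ∈ D.pos))

/-- `(α, r)` encodes a negative affine root. -/
def IsAffNeg (a : V × ℤ) : Prop := D.IsAffPos (-a.1, -a.2)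

/-- The simple affine roots `a₀ = -ϑ∨ + c`, `a_j = α_j∨`. -/
def aSimple (j : Fin (D.n + 1)) : V × ℤ :=
  Fin.cons (α := fun _ => V × ℤ) (-D.hshort, (1 : ℤ))
    (fun i => (D.simpleRoot i, (0 : ℤ))) j

/-- The reflections generating the finite Weyl group `W₀`. -/
def W0Gens : Set (Equiv.Perm V) :=
  {e | ∃ α ∈ D.R0, ∀ x, e x = x - ⟪x, coroot α⟫ • α}

/-- The finite Weyl group `W₀`. -/
def W0 : Subgroup (Equiv.Perm V) := Subgroup.closure D.W0Gens

variable (c : ℝ)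

/-- The affine reflections generating the affine Weyl group `W_R`. -/
def AffGens : Set (Equiv.Perm V) :=
  {e | ∃ a : V × ℤ, D.IsAffRoot a ∧ ∀ x, e x = sAff c a x}

/-- The affine Weyl group `W_R`. -/
def WR : Subgroup (Equiv.Perm V) := Subgroup.closure (D.AffGens c)

/-- The translations `t_{cλ}`, `λ ∈ P`. -/
def TransGens : Set (Equiv.Perm V) :=
  {e | ∃ lam ∈ D.weightLattice, ∀ x : V, e x = x + c • lam}

/-- The extended affine Weyl group `W = W₀ ⋉ t(cP)`. -/
def Wext : Subgroup (Equiv.Perm V) :=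
  Subgroup.closure (D.AffGens c ∪ D.TransGens c)

/-- The set `R(w) = R⁺ ∩ w⁻¹(R⁻)`. -/
def RW (w : Equiv.Perm V) : Set (V × ℤ) :=
  {a | D.IsAffPos a ∧ ∃ b : V × ℤ, D.IsAffNeg b ∧ mapsRoot c w a b}

/-- The length `ℓ(w) = #R(w)`. -/
def len (w : Equiv.Perm V) : ℕ := (D.RW c w).ncard

/-- The closed fundamental alcove `A_c`. -/
def alcove : Set V := {x | ∀ a : V × ℤ, D.IsAffPos a → 0 ≤ aval c a x}

/-- `wmin x` is the unique shortest element of the affine Weyl group mapping `x` into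
the fundamental alcove. -/
def IsWmin (wmin : V → Equiv.Perm V) : Prop :=
  ∀ x : V, wmin x ∈ D.WR c ∧ (wmin x) x ∈ D.alcove c ∧
    ∀ w ∈ D.WR c, w x ∈ D.alcove c → D.len c (wmin x) < D.len c w ∨ w = wmin x

/-- One step in the Bruhat order: `w < w s_a` whenever `ℓ(w) < ℓ(w s_a)`. -/
def bruhatStep (w w' : Equiv.Perm V) : Prop :=
  ∃ a : V × ℤ, D.IsAffPos a ∧ ∃ e : Equiv.Perm V,
    (∀ x, e x = sAff c a x) ∧ w' = w * e ∧ D.len c w < D.len c w'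

/-- The Bruhat order on the affine Weyl group. -/
def bruhatLE (w w' : Equiv.Perm V) : Prop :=
  Relation.ReflTransGen (D.bruhatStep c) w w'

/-- The partial order on `V`: `x ≤ y` iff `x₊ = y₊` and `w_x ≤ w_y` (Bruhat). -/
def vle (wmin : V → Equiv.Perm V) (x y : V) : Prop :=
  (wmin x) x = (wmin y) y ∧ D.bruhatLE c (wmin x) (wmin y)

/-- The interval `[x, y]` for the order `vle`. -/
def vInterval (wmin : V → Equiv.Perm V) (x y : V) : Set V :=
  {z : V | D.vle c wmin x z ∧ D.vle c wmin z y}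

/-- The partial order `⪯` on the weight lattice:
`μ ⪯ λ` iff `λ - μ ∈ Q` and `Conv [μ₊, μ] ⊆ Conv [λ₊, λ]`. -/
def pleq (wmin : V → Equiv.Perm V) (μ lam : V) : Prop :=
  lam - μ ∈ D.rootLattice ∧
    convexHull ℝ (D.vInterval c wmin ((wmin μ) μ) μ)
      ⊆ convexHull ℝ (D.vInterval c wmin ((wmin lam) lam) lam)

section Ops

variable {R : Type*} [Field R]

/-- `τ` is a multiplicity function: nonvanishing on affine roots, and invariant
under the (extended affine) Weyl group action on the affine roots. -/
def IsMultiplicity (τ : V × ℤ → R) : Prop :=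
  (∀ a : V × ℤ, D.IsAffRoot a → τ a ≠ 0) ∧
    ∀ w ∈ D.Wext c, ∀ a b : V × ℤ, D.IsAffRoot a → D.IsAffRoot b →
      mapsRoot c w a b → τ a = τ b

/-- `τ_w = ∏_{a ∈ R(w)} τ_a`. -/
def tauw (τ : V × ℤ → R) (w : Equiv.Perm V) : R := ∏ᶠ a ∈ D.RW c w, τ a

/-- `τ₀`, the multiplicity of the affine simple root `a₀`. -/
def tauZero (τ : V × ℤ → R) : R := τ (-D.hshort, (1 : ℤ))

/-- The operator `I_{j₁} ∘ ⋯ ∘ I_{jℓ}` attached to a word in the simple reflections. -/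
def wordOp (τ : V × ℤ → R) (l : List (Fin (D.n + 1))) : (V → R) → V → R :=
  (l.map fun j => Iop c τ (D.aSimple j)).foldr (· ∘ ·) id

/-- `l` is a reduced word for `w`, i.e. `w = s_{j₁} ∘ ⋯ ∘ s_{jℓ}` with `ℓ = ℓ(w)`. -/
def IsReducedWord (w : Equiv.Perm V) (l : List (Fin (D.n + 1))) : Prop :=
  l.length = D.len c w ∧
    ∀ x : V, w x = ((l.map fun j => sAff c (D.aSimple j)).foldr (· ∘ ·) id) x

/-- `e∨_τ(η) = ∏_{α ∈ R₀⁺} τ_{α∨}^{⟨η,α∨⟩}`. -/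
def etau (τ : V × ℤ → R) (η : V) : R :=
  ∏ α ∈ D.pos, τ (α, (0 : ℤ)) ^ ⌊⟪η, coroot α⟫⌋

/-- `h∨_τ = τ₀² e∨_τ(ϑ)`. -/
def hvee (τ : V × ℤ → R) : R := D.tauZero τ ^ 2 * D.etau τ D.hshort

/-- `θ(μ) = #{b ∈ R(w_μ) : b(μ) = -2}`. -/
def theta (wmin : V → Equiv.Perm V) (μ : V) : ℕ :=
  {b : V × ℤ | b ∈ D.RW c (wmin μ) ∧ aval c b μ = -2}.ncard

/-- The coefficient `c_{λ,η} = θ(λ-η) e∨_τ(η) (h∨_τ)^{-sign⟨λ,η∨⟩}`. -/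
def ccoef (τ : V × ℤ → R) (wmin : V → Equiv.Perm V) (lam η : V) : R :=
  (D.theta c wmin (lam - η) : R) * D.etau τ η *
    D.hvee τ ^ (-sgnZ ⟪lam, coroot η⟫)

/-- The coefficient `a_{λ,ν} = τ_{w_{w_λ(λ-ν)}} τ_{w_{w_λ(λ-ν)} w_λ} τ_{w_λ}⁻¹`. -/
def acoef (τ : V × ℤ → R) (wmin : V → Equiv.Perm V) (lam ν : V) : R :=
  D.tauw c τ (wmin ((wmin lam) (lam - ν))) *
    D.tauw c τ (wmin ((wmin lam) (lam - ν)) * wmin lam) *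
    (D.tauw c τ (wmin lam))⁻¹

/-- The coefficient `b_{λ,ν}`. -/
def bcoef (τ : V × ℤ → R) (wmin : V → Equiv.Perm V) (lam ν : V) : R :=
  if (wmin (lam - ν)) (lam - ν) = (wmin lam) lam then
    D.tauw c τ (wmin ((wmin lam) (lam - ν))) ^ 2 *
      (if D.IsAffNeg (ν, ⌊(1 - ⟪lam, coroot ν⟫) / c⌋) then 1 else 0)
  else D.ccoef c τ wmin ((wmin lam) lam) (linPart (wmin lam) ν)

/-- The intertwining operator `(𝒥f)(λ) = τ_{w_λ}⁻¹ (I_{w_λ} f)(λ₊)`, where `Iw` assigns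
to each `w_λ` the composite of integral-reflection operators along a reduced word. -/
def Jcal (τ : V × ℤ → R) (wmin : V → Equiv.Perm V)
    (Iw : Equiv.Perm V → (V → R) → V → R) (f : V → R) (x : V) : R :=
  (D.tauw c τ (wmin x))⁻¹ * Iw (wmin x) f ((wmin x) x)

end Ops

/-- The Yang–Yang type Morse function `𝒱_μ`. -/
def morse (t : V → ℝ) (μ ξ : V) : ℝ :=
  (c / 2) * ⟪ξ, ξ⟫ - 2 * Real.pi * ⟪D.rhoVee + μ, ξ⟫ +
    ∑ α ∈ D.pos, (2 / ⟪α, α⟫) * ∫ x in (0:ℝ)..(⟪ξ, α⟫), mvfun (t α) x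

/-- The critical equation `cξ + ∑_{α>0} v_α(⟨ξ,α⟩) α∨ = 2π(ρ∨+μ)`. -/
def criticalEq (t : V → ℝ) (μ ξ : V) : Prop :=
  c • ξ + ∑ α ∈ D.pos, mvfun (t α) ⟪ξ, α⟫ • coroot α
    = (2 * Real.pi) • (D.rhoVee + μ)

/-- The Hessian bilinear form `H_{η,ζ}(ξ)`. -/
def hessForm (t : V → ℝ) (ξ η ζ : V) : ℝ :=
  c * ⟪η, ζ⟫ + ∑ α ∈ D.R0,
    (1 - t α ^ 2) * ⟪η, α⟫ * ⟪ζ, α⟫ /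
      (⟪α, α⟫ * (1 - 2 * t α * Real.cos ⟪ξ, α⟫ + t α ^ 2))

/-- `κ_± = (2/n) ∑_{α>0} (1-t_α²)/(1 ± |t_α|)²`; here `s = ±1`. -/
def kappaPM (t : V → ℝ) (s : ℝ) : ℝ :=
  (2 / (D.n : ℝ)) * ∑ α ∈ D.pos, (1 - t α ^ 2) / (1 + s * |t α|) ^ 2

end RootSystemData

/-!
A Bruhat step `w s_a < w` amounts to reflecting a point in an affine hyperplane that separates it
from the fundamental alcove, so `[y₊, y]` is the least set that contains `y` and is closed under
`z ↦ s_a z` for positive affine roots `a` with `a(z) ≤ 0`. If `S` is closed under these reflections,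
then so is `Conv S`. Minimality of `[x₊, x]` then gives (iii), and also (i) because `Conv (W₀ y)` is
closed as well. As `W₀` consists of isometries, `y` has maximal norm in `Conv [y₊, y]`; by strict
convexity of the norm a point of maximal norm in `Conv [y₊, y]` lies in `[y₊, y]` itself, so
equality of the hulls yields `x ≤ y` and `y ≤ x`.
-/

section ConvexHull

variable {𝕜 E : Type*} [Field 𝕜] [LinearOrder 𝕜] [IsStrictOrderedRing 𝕜] [AddCommGroup E]
  [Module 𝕜 E]

theorem sub_smul_mem_of_le {C : Set E} (hC : Convex 𝕜 C) {x v : E} {s t : 𝕜} (hx : x ∈ C)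
    (hs : x - s • v ∈ C) (hst : s ≤ t) (ht : t ≤ 0) : x - t • v ∈ C := by
  rcases ht.eq_or_lt with rfl | ht
  · simpa using hx
  have hs0 : s < 0 := hst.trans_lt ht
  rw [sub_eq_add_neg] at hs
  have := hC.add_smul_mem hx hs (t := t / s)
    ⟨(div_pos_of_neg_of_neg ht hs0).le, (div_le_one_of_neg hs0).2 hst⟩
  rwa [smul_neg, smul_smul, div_mul_cancel₀ _ hs0.ne, ← sub_eq_add_neg] at this

theorem sub_smul_mem_convexHull {S : Set E} (f : E →ᵃ[𝕜] 𝕜) (v : E)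
    (hS : ∀ z ∈ S, f z ≤ 0 → z - f z • v ∈ S) {x : E} (hx : x ∈ convexHull 𝕜 S) (hfx : f x ≤ 0) :
    x - f x • v ∈ convexHull 𝕜 S := by
  have hC : Convex 𝕜 (convexHull 𝕜 S) := convex_convexHull 𝕜 S
  -- Unlike `z ↦ z - f z • v`, overshooting by some `s ≤ min (f z) 0` is a convex condition on `z`.
  have overshoot : convexHull 𝕜 S ⊆
      {z ∈ convexHull 𝕜 S | ∃ s, s ≤ f z ∧ s ≤ 0 ∧ z - s • v ∈ convexHull 𝕜 S} := by
    refine convexHull_min (fun z hz => ?_) ?_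
    · have hzC : z ∈ convexHull 𝕜 S := subset_convexHull 𝕜 S hz
      refine ⟨hzC, ?_⟩
      rcases le_total (f z) 0 with h | h
      · exact ⟨f z, le_rfl, h, subset_convexHull 𝕜 S (hS z hz h)⟩
      · exact ⟨0, h, le_rfl, by simpa using hzC⟩
    · rintro z ⟨hz, s, hsz, hs0, hs⟩ z' ⟨hz', s', hsz', hs0', hs'⟩ t t' ht ht' htt'
      refine ⟨hC hz hz' ht ht' htt', t • s + t' • s', ?_, ?_, ?_⟩
      · rw [Convex.combo_affine_apply htt']
        gcongr
      · exact add_nonpos (smul_nonpos_of_nonneg_of_nonpos ht hs0)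
          (smul_nonpos_of_nonneg_of_nonpos ht' hs0')
      · convert hC hs hs' ht ht' htt' using 1
        simp only [smul_eq_mul]
        module
  obtain ⟨-, s, hsx, -, hs⟩ := overshoot hx
  exact sub_smul_mem_of_le hC hx hs hsx hfx

theorem mem_of_mem_convexHull_of_norm_le {F : Type*} [NormedAddCommGroup F] [NormedSpace ℝ F]
    [StrictConvexSpace ℝ F] {S : Set F} {x : F} (hx : x ∈ convexHull ℝ S)
    (hS : ∀ z ∈ S, ‖z‖ ≤ ‖x‖) : x ∈ S := by
  rcases eq_or_ne x 0 with rfl | hx0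
  · obtain ⟨z, hz⟩ := convexHull_nonempty_iff.1 ⟨0, hx⟩
    rwa [← norm_le_zero_iff.1 (by simpa using hS z hz)]
  · have hball : convexHull ℝ S ⊆ Metric.closedBall 0 ‖x‖ :=
      convexHull_min (fun z hz => by simpa using hS z hz) (convex_closedBall 0 ‖x‖)
    have hext : x ∈ (Metric.closedBall 0 ‖x‖).extremePoints ℝ :=
      StrictConvexSpace.sphere_subset_extremePoints_closedBall 0 (norm_ne_zero_iff.2 hx0) (by simp)
    exact extremePoints_convexHull_subset
      (inter_extremePoints_subset_extremePoints_of_subset hball ⟨hx, hext⟩)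

end ConvexHull

namespace RootSystemData

variable {V : Type*} [NormedAddCommGroup V] [InnerProductSpace ℝ V]

section Reflections

theorem inner_coroot_self {α : V} (h : α ≠ 0) : ⟪α, coroot α⟫ = 2 := by
  rw [coroot, real_inner_smul_right, div_mul_cancel₀ _ (inner_self_ne_zero.2 h)]

theorem coroot_neg (α : V) : coroot (-α) = -coroot α := by
  simp [coroot]

theorem norm_sub_inner_coroot_smul (α β : V) : ‖β - ⟪β, coroot α⟫ • α‖ = ‖β‖ := by
  have h : β - ⟪β, coroot α⟫ • α = -(ℝ ∙ α).reflection β := by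
    rw [Submodule.reflection_singleton_apply, coroot, real_inner_smul_right,
      real_inner_self_eq_norm_sq, real_inner_comm]
    simp only [RCLike.ofReal_real_eq_id, id_eq]
    module
  rw [h, norm_neg, LinearIsometryEquiv.norm_map]

theorem coroot_sub_inner_coroot_smul (α β : V) :
    coroot (β - ⟪β, coroot α⟫ • α) = coroot β - ⟪α, coroot β⟫ • coroot α := by
  rw [coroot, real_inner_self_eq_norm_sq, norm_sub_inner_coroot_smul, ← real_inner_self_eq_norm_sq]
  simp only [coroot, smul_sub, smul_smul, real_inner_smul_right, real_inner_comm α β]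
  congr 2
  ring

variable (c : ℝ)

theorem aval_neg (a : V × ℤ) (x : V) : aval c (-a) x = -aval c a x := by
  simp only [aval, Prod.fst_neg, Prod.snd_neg, coroot_neg, inner_neg_right]
  push_cast
  ring

theorem aval_sAff (a b : V × ℤ) (x : V) :
    aval c b (sAff c a x) = aval c b x - aval c a x * ⟪a.1, coroot b.1⟫ := by
  simp only [sAff, aval, inner_sub_left, real_inner_smul_left]
  ring

theorem aval_sAff_self {a : V × ℤ} (h : a.1 ≠ 0) (x : V) :
    aval c a (sAff c a x) = -aval c a x := by
  rw [aval_sAff, inner_coroot_self h]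
  ring

theorem sAff_of_aval_eq_zero {c : ℝ} {a : V × ℤ} {x : V} (h : aval c a x = 0) :
    sAff c a x = x := by
  rw [sAff, h, zero_smul, sub_zero]

theorem sAff_zero_right (α x : V) : sAff c (α, 0) x = x - ⟪x, coroot α⟫ • α := by
  simp [sAff, aval]

theorem sAff_involutive (a : V × ℤ) : Function.Involutive (sAff c a) := fun x => by
  by_cases h : a.1 = 0
  · simp [sAff, h]
  · rw [sAff, aval_sAff_self c h, sAff, neg_smul, sub_neg_eq_add, sub_add_cancel]

/-- The affine reflection `s_a` as a permutation; for `a.1 = 0` it is the identity. -/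
def affReflection (a : V × ℤ) : Equiv.Perm V := (sAff_involutive c a).toPerm

@[simp]
theorem affReflection_apply (a : V × ℤ) (x : V) : affReflection c a x = sAff c a x := rfl

@[simp]
theorem affReflection_inv (a : V × ℤ) : (affReflection c a)⁻¹ = affReflection c a := rfl

theorem mul_affReflection_cancel (w : Equiv.Perm V) (a : V × ℤ) :
    w * affReflection c a * affReflection c a = w := by
  rw [mul_assoc, mul_eq_left, ← inv_eq_iff_mul_eq_one, affReflection_inv]

theorem mul_affReflection_inv_apply (w : Equiv.Perm V) (a : V × ℤ) (x : V) :
    (w * affReflection c a)⁻¹ x = sAff c a (w⁻¹ x) := by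
  simp

/-- The affine function `x ↦ a(x)`, bundled. -/
def avalAffineMap (a : V × ℤ) : V →ᵃ[ℝ] ℝ :=
  ((innerₗ V).flip (coroot a.1)).toAffineMap + AffineMap.const ℝ V (a.2 * c)

theorem avalAffineMap_apply (a : V × ℤ) (x : V) : avalAffineMap c a x = aval c a x := by
  simp [avalAffineMap, aval, real_inner_comm]

/-- The affine root `s_a b`; the floor is that of the integer `⟨α, β∨⟩`. -/
def reflectRoot (a b : V × ℤ) : V × ℤ :=
  (b.1 - ⟪b.1, coroot a.1⟫ • a.1, b.2 - ⌊⟪a.1, coroot b.1⟫⌋ * a.2)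

end Reflections

section AffineRoots

variable (D : RootSystemData V) (c : ℝ) {a b : V × ℤ} {w : Equiv.Perm V}

variable {D} in
theorem IsAffRoot.ne_zero (ha : D.IsAffRoot a) : a.1 ≠ 0 := D.ne_zero _ ha

theorem neg_mem {α : V} (h : α ∈ D.R0) : -α ∈ D.R0 := by
  have := D.reflect_mem α h α h
  rwa [inner_coroot_self (D.ne_zero α h), two_smul, sub_add_cancel_left] at this

theorem floor_inner_coroot {α β : V} (hα : α ∈ D.R0) (hβ : β ∈ D.R0) :
    (⌊⟪β, coroot α⟫⌋ : ℝ) = ⟪β, coroot α⟫ := by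
  obtain ⟨k, hk⟩ := D.crystallographic α hα β hβ
  rw [hk, Int.floor_intCast]

variable {D} in
theorem IsAffRoot.reflectRoot (ha : D.IsAffRoot a) (hb : D.IsAffRoot b) :
    D.IsAffRoot (reflectRoot a b) :=
  D.reflect_mem _ ha _ hb

theorem aval_reflectRoot (ha : D.IsAffRoot a) (hb : D.IsAffRoot b) (x : V) :
    aval c (reflectRoot a b) x = aval c b (sAff c a x) := by
  rw [aval_sAff]
  simp only [reflectRoot, aval, coroot_sub_inner_coroot_smul, inner_sub_right,
    real_inner_smul_right]
  push_cast
  rw [D.floor_inner_coroot hb ha]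
  ring

theorem reflectRoot_reflectRoot (ha : D.IsAffRoot a) (hb : D.IsAffRoot b) :
    reflectRoot a (reflectRoot a b) = b := by
  refine Prod.ext ?_ ?_
  · simpa only [reflectRoot, sAff_zero_right] using sAff_involutive 0 (a.1, 0) b.1
  · have h : ⟪a.1, coroot (reflectRoot a b).1⟫ = -⟪a.1, coroot b.1⟫ := by
      rw [reflectRoot, coroot_sub_inner_coroot_smul, inner_sub_right, real_inner_smul_right,
        inner_coroot_self ha.ne_zero]
      ring
    obtain ⟨k, hk⟩ := D.crystallographic b.1 hb a.1 ha
    rw [hk, ← Int.cast_neg] at h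
    rw [reflectRoot, h, Int.floor_intCast, reflectRoot, hk, Int.floor_intCast]
    ring

theorem reflectRoot_self (ha : a.1 ≠ 0) : reflectRoot a a = -a := by
  refine Prod.ext ?_ ?_
  · rw [reflectRoot, inner_coroot_self ha, two_smul, sub_add_cancel_left, Prod.fst_neg]
  · rw [reflectRoot, inner_coroot_self ha, Int.floor_ofNat, Prod.snd_neg]
    ring

theorem affReflection_mem_WR (ha : D.IsAffRoot a) : affReflection c a ∈ D.WR c :=
  Subgroup.subset_closure ⟨a, ha, fun _ => rfl⟩

variable {D c} in
theorem exists_mapsRoot (hw : w ∈ D.WR c) (ha : D.IsAffRoot a) :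
    ∃ b, D.IsAffRoot b ∧ mapsRoot c w a b := by
  have reflect : ∀ e ∈ D.AffGens c, ∀ b, D.IsAffRoot b →
      ∃ d, D.IsAffRoot d ∧ ∀ x, aval c b (e x) = aval c d x := by
    rintro e ⟨r, hr, he⟩ b hb
    exact ⟨_, hr.reflectRoot hb, fun x => by rw [he, aval_reflectRoot D c hr hb]⟩
  have inv_mem_gens : ∀ e ∈ D.AffGens c, e⁻¹ ∈ D.AffGens c := by
    rintro e ⟨r, hr, he⟩
    exact ⟨r, hr, fun x => by rw [Equiv.Perm.inv_eq_iff_eq, he, sAff_involutive]⟩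
  induction hw using Subgroup.closure_induction_left with
  | one => exact ⟨a, ha, fun x => rfl⟩
  | mul_left e he u _ hu =>
    obtain ⟨b, hb, hab⟩ := hu
    obtain ⟨d, hd, hbd⟩ := reflect _ (inv_mem_gens e he) b hb
    exact ⟨d, hd, fun x => by rw [← hbd, ← hab, mul_inv_rev]; rfl⟩
  | inv_mul_cancel e he u _ hu =>
    obtain ⟨b, hb, hab⟩ := hu
    obtain ⟨d, hd, hbd⟩ := reflect e he b hb
    exact ⟨d, hd, fun x => by rw [← hbd, ← hab, mul_inv_rev, inv_inv]; rfl⟩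

theorem isAffPos_or_isAffNeg (ha : D.IsAffRoot a) : D.IsAffPos a ∨ D.IsAffNeg a := by
  rcases lt_trichotomy a.2 0 with h | h | h
  · exact Or.inr ⟨D.neg_mem ha, Or.inl (by dsimp only; omega)⟩
  · rcases D.pos_or_neg a.1 ha with h' | h'
    · exact Or.inl ⟨ha, Or.inr ⟨h, h'⟩⟩
    · exact Or.inr ⟨D.neg_mem ha, Or.inr ⟨by simp [h], h'⟩⟩
  · exact Or.inl ⟨ha, Or.inl h⟩

end AffineRoots

section OpenAlcove

variable (D : RootSystemData V) (c : ℝ)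

/-- The open fundamental alcove. Evaluation at one of its points detects the sign of an affine
root. -/
def openAlcove : Set V := {p | ∀ a, D.IsAffPos a → 0 < aval c a p}

theorem span_range_simpleRoot : Submodule.span ℝ (Set.range D.simpleRoot) = ⊤ := by
  have pos_mem : ∀ α ∈ D.pos, α ∈ Submodule.span ℝ (Set.range D.simpleRoot) := by
    intro α hα
    obtain ⟨k, rfl⟩ := D.pos_natCombo α hα
    exact Submodule.sum_mem _ fun j _ => Submodule.smul_mem _ _ (Submodule.subset_span ⟨j, rfl⟩)
  rw [eq_top_iff, ← D.span_top, Submodule.span_le]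
  intro α hα
  rcases D.pos_or_neg α hα with h | h
  · exact pos_mem α h
  · exact neg_mem_iff.1 (pos_mem _ h)

/-- The basis of simple roots. -/
def simpleBasis : Module.Basis (Fin D.n) ℝ V :=
  basisOfTopLeSpanOfCardEqFinrank D.simpleRoot D.span_range_simpleRoot.ge (by simp [D.rank_eq])

theorem sumCoords_simpleBasis_pos {α : V} (hα : α ∈ D.pos) : 0 < D.simpleBasis.sumCoords α := by
  obtain ⟨k, hk⟩ := D.pos_natCombo α hα
  have hheight : D.simpleBasis.sumCoords α = ∑ j, (k j : ℝ) := by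
    have hone : ∀ j, D.simpleBasis.sumCoords (D.simpleRoot j) = 1 := fun j => by
      simpa [simpleBasis] using D.simpleBasis.sumCoords_self_apply j
    simp only [hk, map_sum, map_smul, hone, smul_eq_mul, mul_one]
  obtain ⟨j, hj⟩ : ∃ j, k j ≠ 0 := by
    by_contra! h
    exact D.ne_zero α (D.pos_subset hα) (by simp [hk, h])
  rw [hheight]
  exact Finset.sum_pos' (fun j _ => Nat.cast_nonneg _) ⟨j, Finset.mem_univ j, by positivity⟩

theorem exists_forall_pos_inner_coroot_pos : ∃ p : V, ∀ α ∈ D.pos, 0 < ⟪p, coroot α⟫ := by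
  have : FiniteDimensional ℝ V := D.simpleBasis.finiteDimensional_of_finite
  let height : StrongDual ℝ V := LinearMap.toContinuousLinearMap D.simpleBasis.sumCoords
  refine ⟨(InnerProductSpace.toDual ℝ V).symm height, fun α hα => ?_⟩
  have hα0 : 0 < ⟪α, α⟫ := real_inner_self_pos.2 (D.ne_zero α (D.pos_subset hα))
  have hheight : 0 < height α := D.sumCoords_simpleBasis_pos hα
  rw [coroot, real_inner_smul_right, InnerProductSpace.toDual_symm_apply]
  positivity

open Filter Topology in
variable {c} in
theorem openAlcove_nonempty (hc : 0 < c) : (D.openAlcove c).Nonempty := by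
  obtain ⟨p, hp⟩ := D.exists_forall_pos_inner_coroot_pos
  have small : ∀ᶠ t in 𝓝[>] (0 : ℝ), ∀ α ∈ D.R0, -c < t * ⟪p, coroot α⟫ := by
    refine (Finset.eventually_all _).2 fun α _ => nhdsWithin_le_nhds ?_
    exact (continuous_id.mul continuous_const).continuousAt.eventually_const_lt (by simpa using hc)
  obtain ⟨t, ht, ht0 : 0 < t⟩ := (small.and self_mem_nhdsWithin).exists
  refine ⟨t • p, fun a ⟨ha, hpos⟩ => ?_⟩
  rw [aval, real_inner_smul_left]
  rcases hpos with h1 | ⟨h0, hpos⟩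
  · have h1' : (1 : ℝ) ≤ a.2 := by exact_mod_cast h1
    linarith [ht a.1 ha, le_mul_of_one_le_left hc.le h1']
  · simpa [h0] using mul_pos ht0 (hp a.1 hpos)

variable {D c} {a : V × ℤ} {p : V}

theorem isAffPos_iff_aval_pos (hp : p ∈ D.openAlcove c) (ha : D.IsAffRoot a) :
    D.IsAffPos a ↔ 0 < aval c a p := by
  refine ⟨hp a, fun h => (D.isAffPos_or_isAffNeg ha).resolve_right fun hneg => ?_⟩
  have := hp (-a) hneg
  rw [aval_neg] at this
  linarith

theorem isAffNeg_iff_aval_neg (hp : p ∈ D.openAlcove c) (ha : D.IsAffRoot a) :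
    D.IsAffNeg a ↔ aval c a p < 0 := by
  rw [← neg_pos, ← aval_neg]
  exact isAffPos_iff_aval_pos hp (D.neg_mem ha)

theorem aval_ne_zero_of_mem_openAlcove (hp : p ∈ D.openAlcove c) (ha : D.IsAffRoot a) :
    aval c a p ≠ 0 :=
  (D.isAffPos_or_isAffNeg ha).elim (fun h => ((isAffPos_iff_aval_pos hp ha).1 h).ne')
    fun h => ((isAffNeg_iff_aval_neg hp ha).1 h).ne

theorem openAlcove_subset_alcove : D.openAlcove c ⊆ D.alcove c :=
  fun _ hp a ha => (hp a ha).le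

end OpenAlcove

section Inversions

variable (D : RootSystemData V) (c : ℝ)

/-- The positive affine roots whose hyperplanes separate `z` from the fundamental alcove. -/
def sepRoots (z : V) : Set (V × ℤ) := {a | D.IsAffPos a ∧ aval c a z < 0}

variable {D c} {a b : V × ℤ} {w : Equiv.Perm V} {p z : V}

theorem finite_sepRoots (hc : 0 < c) (z : V) : (D.sepRoots c z).Finite := by
  refine (D.R0.finite_toSet.biUnion fun α _ =>
    (Set.finite_Icc 0 ⌈-⟪z, coroot α⟫ / c⌉).image (Prod.mk α)).subset ?_
  rintro ⟨α, r⟩ ⟨⟨hα, hr⟩, hz⟩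
  refine Set.mem_biUnion hα ⟨r, ⟨?_, ?_⟩, rfl⟩
  · dsimp only at hr
    omega
  · have hle : (r : ℝ) ≤ -⟪z, coroot α⟫ / c := by
      rw [le_div_iff₀ hc]
      dsimp only [aval] at hz
      linarith
    exact_mod_cast hle.trans (Int.le_ceil _)

theorem aval_nonpos_of_mem_RW (hz : w z ∈ D.alcove c) (ha : a ∈ D.RW c w) : aval c a z ≤ 0 := by
  obtain ⟨-, b, hb, hab⟩ := ha
  have h : 0 ≤ aval c (-b) (w z) := hz (-b) hb
  simpa [aval_neg, ← hab (w z)] using h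

theorem sepRoots_subset_RW (hw : w ∈ D.WR c) (hz : w z ∈ D.alcove c) :
    D.sepRoots c z ⊆ D.RW c w := by
  rintro a ⟨ha, haz⟩
  obtain ⟨b, hb, hab⟩ := exists_mapsRoot hw ha.1
  have hbz : aval c b (w z) = aval c a z := by simp [← hab (w z)]
  have hbneg : D.IsAffNeg b :=
    (D.isAffPos_or_isAffNeg hb).resolve_left fun h => (hz b h).not_gt (hbz ▸ haz)
  exact ⟨ha, b, hbneg, hab⟩

theorem RW_eq_sepRoots (hw : w ∈ D.WR c) (hz : w z ∈ D.alcove c)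
    (h : ∀ a ∈ D.RW c w, aval c a z ≠ 0) : D.RW c w = D.sepRoots c z :=
  Set.Subset.antisymm
    (fun a ha => ⟨ha.1, (aval_nonpos_of_mem_RW hz ha).lt_of_ne (h a ha)⟩)
    (sepRoots_subset_RW hw hz)

theorem aval_inv_apply_ne_zero (hp : p ∈ D.openAlcove c) (hw : w ∈ D.WR c)
    (ha : D.IsAffRoot a) : aval c a (w⁻¹ p) ≠ 0 := by
  obtain ⟨b, hb, hab⟩ := exists_mapsRoot hw ha
  rw [hab]
  exact aval_ne_zero_of_mem_openAlcove hp hb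

theorem RW_eq_sepRoots_inv_apply (hp : p ∈ D.openAlcove c) (hw : w ∈ D.WR c) :
    D.RW c w = D.sepRoots c (w⁻¹ p) :=
  RW_eq_sepRoots hw (by simpa using openAlcove_subset_alcove hp)
    fun _ ha => aval_inv_apply_ne_zero hp hw ha.1.1

theorem finite_RW (hc : 0 < c) (hw : w ∈ D.WR c) : (D.RW c w).Finite := by
  obtain ⟨p, hp⟩ := D.openAlcove_nonempty hc
  rw [RW_eq_sepRoots_inv_apply hp hw]
  exact finite_sepRoots hc _

theorem RW_one (hc : 0 < c) : D.RW c 1 = ∅ := by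
  obtain ⟨p, hp⟩ := D.openAlcove_nonempty hc
  rw [RW_eq_sepRoots_inv_apply hp (one_mem _)]
  exact Set.eq_empty_of_forall_notMem fun a ⟨ha, hneg⟩ => hneg.not_gt (hp a ha)

theorem mem_RW_mul_affReflection_iff (hc : 0 < c) (hw : w ∈ D.WR c) (ha : D.IsAffPos a) :
    a ∈ D.RW c (w * affReflection c a) ↔ a ∉ D.RW c w := by
  obtain ⟨p, hp⟩ := D.openAlcove_nonempty hc
  have hne : aval c a (w⁻¹ p) ≠ 0 := aval_inv_apply_ne_zero hp hw ha.1
  rw [RW_eq_sepRoots_inv_apply hp (mul_mem hw (D.affReflection_mem_WR c ha.1)),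
    RW_eq_sepRoots_inv_apply hp hw, mul_affReflection_inv_apply]
  simp only [sepRoots, Set.mem_ofPred_eq, ha, true_and, aval_sAff_self c (D.ne_zero _ ha.1),
    neg_lt_zero, not_lt, hne.symm.le_iff_lt]

theorem reflectRoot_mem_RW_sdiff (hc : 0 < c) (hw : w ∈ D.WR c) (ha : D.IsAffPos a)
    (hb : b ∈ D.RW c (w * affReflection c a)) (hab : D.IsAffPos (reflectRoot a b)) :
    reflectRoot a b ∈ D.RW c w \ {a} := by
  obtain ⟨p, hp⟩ := D.openAlcove_nonempty hc
  rw [RW_eq_sepRoots_inv_apply hp (mul_mem hw (D.affReflection_mem_WR c ha.1)),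
    mul_affReflection_inv_apply] at hb
  obtain ⟨hb, hbneg⟩ := hb
  rw [RW_eq_sepRoots_inv_apply hp hw]
  refine ⟨⟨hab, by rwa [aval_reflectRoot D c ha.1 hb.1]⟩, fun h => ?_⟩
  have hba : b = -a := by
    have h : reflectRoot a b = a := h
    rw [← D.reflectRoot_reflectRoot ha.1 hb.1, h, reflectRoot_self (D.ne_zero _ ha.1)]
  have hbp : 0 < -aval c a p := by simpa only [hba, aval_neg] using hp b hb
  linarith [hp a ha]

theorem mem_RW_sdiff_of_not_isAffPos_reflectRoot (hc : 0 < c) (hw : w ∈ D.WR c)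
    (ha : a ∈ D.RW c w) (hb : b ∈ D.RW c (w * affReflection c a))
    (hab : ¬ D.IsAffPos (reflectRoot a b)) : b ∈ D.RW c w \ {a} := by
  have hba : b ≠ a := by
    rintro rfl
    exact (mem_RW_mul_affReflection_iff hc hw ha.1).1 hb ha
  obtain ⟨p, hp⟩ := D.openAlcove_nonempty hc
  rw [RW_eq_sepRoots_inv_apply hp (mul_mem hw (D.affReflection_mem_WR c ha.1.1)),
    mul_affReflection_inv_apply] at hb
  rw [RW_eq_sepRoots_inv_apply hp hw] at ha ⊢
  obtain ⟨hb, hbneg⟩ := hb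
  obtain ⟨ha, haneg⟩ := ha
  rw [isAffPos_iff_aval_pos hp (IsAffRoot.reflectRoot ha.1 hb.1),
    aval_reflectRoot D c ha.1 hb.1, aval_sAff] at hab
  rw [aval_sAff] at hbneg
  -- `s_a b = b - k a` with `k = ⟨α, β∨⟩`; since `b` is positive and `s_a b` is not, `k > 0`.
  have hk : 0 < ⟪a.1, coroot b.1⟫ := by
    by_contra! hk
    nlinarith [hp a ha, hp b hb]
  exact ⟨⟨hb, by nlinarith⟩, hba⟩

theorem len_mul_affReflection_lt (hc : 0 < c) (hw : w ∈ D.WR c) (ha : a ∈ D.RW c w) :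
    D.len c (w * affReflection c a) < D.len c w := by
  have hinvol : ∀ b ∈ D.RW c (w * affReflection c a), reflectRoot a (reflectRoot a b) = b :=
    fun b hb => D.reflectRoot_reflectRoot ha.1.1 hb.1.1
  refine (Set.ncard_le_ncard_of_injOn
    (fun b => if D.IsAffPos (reflectRoot a b) then reflectRoot a b else b)
    (fun b hb => ?_) (fun b hb b' hb' h => ?_) (finite_RW hc hw).sdiff).trans_lt
    (Set.ncard_sdiff_singleton_lt_of_mem ha (finite_RW hc hw))
  · split_ifs with hab
    · exact reflectRoot_mem_RW_sdiff hc hw ha.1 hb hab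
    · exact mem_RW_sdiff_of_not_isAffPos_reflectRoot hc hw ha hb hab
  · dsimp only at h
    split_ifs at h with hab hab' hab'
    · rw [← hinvol b hb, h, hinvol b' hb']
    · rw [← h, hinvol b hb] at hab'
      exact absurd hb.1 hab'
    · rw [h, hinvol b' hb'] at hab
      exact absurd hb'.1 hab
    · exact h

end Inversions

section Bruhat

variable {D : RootSystemData V} {c : ℝ} {w u : Equiv.Perm V}

theorem bruhatStep_iff (hc : 0 < c) (hu : u ∈ D.WR c) :
    D.bruhatStep c w u ↔ ∃ a ∈ D.RW c u, w = u * affReflection c a := by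
  constructor
  · rintro ⟨a, ha, e, he, rfl, hlt⟩
    obtain rfl : e = affReflection c a := Equiv.ext he
    have hw : w ∈ D.WR c := by
      simpa only [mul_affReflection_cancel] using mul_mem hu (D.affReflection_mem_WR c ha.1)
    refine ⟨a, (mem_RW_mul_affReflection_iff hc hw ha).2 fun haw => ?_,
      (mul_affReflection_cancel c w a).symm⟩
    exact (len_mul_affReflection_lt hc hw haw).not_gt hlt
  · rintro ⟨a, ha, rfl⟩
    exact ⟨a, ha.1, affReflection c a, fun _ => rfl, (mul_affReflection_cancel c u a).symm,
      len_mul_affReflection_lt hc hu ha⟩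

theorem WR_induction_on_inversions (hc : 0 < c) {motive : Equiv.Perm V → Prop}
    (step : ∀ w ∈ D.WR c, (∀ a ∈ D.RW c w, motive (w * affReflection c a)) → motive w)
    (hw : w ∈ D.WR c) : motive w := by
  induction hn : D.len c w using Nat.strong_induction_on generalizing w with
  | _ n ih =>
    subst hn
    exact step w hw fun a ha => ih _ (len_mul_affReflection_lt hc hw ha)
      (mul_mem hw (D.affReflection_mem_WR c ha.1.1)) rfl

theorem bruhatLE.eq_or_len_lt (h : D.bruhatLE c w u) : w = u ∨ D.len c w < D.len c u := by
  induction h with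
  | refl => exact Or.inl rfl
  | tail _ hstep ih =>
    obtain ⟨_, _, _, _, _, hlt⟩ := hstep
    exact Or.inr (ih.elim (fun h => h ▸ hlt) fun h => h.trans hlt)

end Bruhat

section ShortestElements

variable {D : RootSystemData V} {c : ℝ} {wmin : V → Equiv.Perm V} {w : Equiv.Perm V} {x y z : V}

theorem IsWmin.eq_of_len_le (hwmin : D.IsWmin c wmin) (hw : w ∈ D.WR c) (hz : w z ∈ D.alcove c)
    (h : D.len c w ≤ D.len c (wmin z)) : w = wmin z :=
  ((hwmin z).2.2 w hw hz).resolve_left h.not_gt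

theorem IsWmin.eq_of_RW_eq_sepRoots (hc : 0 < c) (hwmin : D.IsWmin c wmin) (hw : w ∈ D.WR c)
    (hz : w z ∈ D.alcove c) (h : D.RW c w = D.sepRoots c z) : w = wmin z := by
  obtain ⟨hmem, halc, -⟩ := hwmin z
  refine hwmin.eq_of_len_le hw hz ?_
  rw [len, h]
  exact Set.ncard_le_ncard (sepRoots_subset_RW hmem halc) (finite_RW hc hmem)

theorem IsWmin.apply_eq_and_bruhatLE (hc : 0 < c) (hwmin : D.IsWmin c wmin) (hw : w ∈ D.WR c)
    (hz : w z ∈ D.alcove c) : wmin z z = w z ∧ D.bruhatLE c (wmin z) w := by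
  refine WR_induction_on_inversions hc
    (motive := fun w => w z ∈ D.alcove c → wmin z z = w z ∧ D.bruhatLE c (wmin z) w)
    (fun w hw ih hz => ?_) hw hz
  by_cases h : ∃ a ∈ D.RW c w, aval c a z = 0
  · -- The smaller element `w s_a` takes the same value at `z`.
    obtain ⟨a, ha, haz⟩ := h
    have hval : (w * affReflection c a) z = w z := by
      rw [Equiv.Perm.mul_apply, affReflection_apply, sAff_of_aval_eq_zero haz]
    obtain ⟨heq, hle⟩ := ih a ha (hval ▸ hz)
    exact ⟨heq.trans hval, hle.tail ((bruhatStep_iff hc hw).2 ⟨a, ha, rfl⟩)⟩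
  · push Not at h
    obtain rfl := hwmin.eq_of_RW_eq_sepRoots hc hw hz (RW_eq_sepRoots hw hz h)
    exact ⟨rfl, .refl⟩

theorem IsWmin.eq_one_of_mem_alcove (hc : 0 < c) (hwmin : D.IsWmin c wmin)
    (hz : z ∈ D.alcove c) : wmin z = 1 :=
  (hwmin.eq_of_len_le (one_mem _) hz (by simp [len, RW_one hc])).symm

theorem IsWmin.eq_one_of_RW_eq_empty (hc : 0 < c) (hwmin : D.IsWmin c wmin) (hw : w ∈ D.WR c)
    (h : D.RW c w = ∅) : w = 1 := by
  obtain ⟨p, hp⟩ := D.openAlcove_nonempty hc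
  have hsep : D.RW c w = D.sepRoots c (w⁻¹ p) := RW_eq_sepRoots_inv_apply hp hw
  have hmem : w⁻¹ p ∈ D.alcove c := fun a ha => by
    by_contra! hneg
    exact Set.notMem_empty a (h ▸ hsep ▸ ⟨ha, hneg⟩)
  -- Uniqueness of the shortest element takes the place of simple transitivity on alcoves.
  rw [hwmin.eq_of_RW_eq_sepRoots hc hw (by simpa using openAlcove_subset_alcove hp) hsep,
    hwmin.eq_one_of_mem_alcove hc hmem]

theorem IsWmin.one_bruhatLE (hc : 0 < c) (hwmin : D.IsWmin c wmin) (hw : w ∈ D.WR c) :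
    D.bruhatLE c 1 w := by
  refine WR_induction_on_inversions hc (fun w hw ih => ?_) hw
  rcases (D.RW c w).eq_empty_or_nonempty with h | ⟨a, ha⟩
  · rw [hwmin.eq_one_of_RW_eq_empty hc hw h]
    exact .refl
  · exact (ih a ha).tail ((bruhatStep_iff hc hw).2 ⟨a, ha, rfl⟩)

theorem IsWmin.apply_vle (hc : 0 < c) (hwmin : D.IsWmin c wmin) (z : V) :
    D.vle c wmin (wmin z z) z := by
  obtain ⟨hmem, halc, -⟩ := hwmin z
  rw [vle, hwmin.eq_one_of_mem_alcove hc halc]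
  exact ⟨rfl, hwmin.one_bruhatLE hc hmem⟩

theorem IsWmin.mem_vInterval_iff (hc : 0 < c) (hwmin : D.IsWmin c wmin) :
    z ∈ D.vInterval c wmin (wmin y y) y ↔ D.vle c wmin z y := by
  refine ⟨And.right, fun h => ⟨?_, h⟩⟩
  rw [← h.1]
  exact hwmin.apply_vle hc z

theorem vle_antisymm (hxy : D.vle c wmin x y) (hyx : D.vle c wmin y x) : x = y := by
  obtain ⟨heq, hle⟩ := hxy
  have hw : wmin x = wmin y := hle.eq_or_len_lt.resolve_right fun h =>
    hyx.2.eq_or_len_lt.elim (fun h' => h.ne (h' ▸ rfl)) h.asymm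
  exact (wmin y).injective (hw ▸ heq)

end ShortestElements

section DescentClosed

variable {D : RootSystemData V} {c : ℝ} {wmin : V → Equiv.Perm V} {S : Set V} {x y z : V}

variable (D c) in
/-- `S` is closed under reflecting a point towards the fundamental alcove, in the hyperplane of a
positive affine root that is nonpositive at the point. -/
def IsDescentClosed (S : Set V) : Prop :=
  ∀ z ∈ S, ∀ a, D.IsAffPos a → aval c a z ≤ 0 → sAff c a z ∈ S

theorem IsDescentClosed.convexHull (hS : D.IsDescentClosed c S) :
    D.IsDescentClosed c (convexHull ℝ S) := by
  intro x hx a ha hax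
  have h := sub_smul_mem_convexHull (avalAffineMap c a) a.1
    (fun z hz haz => ?_) hx (by rwa [avalAffineMap_apply])
  · rwa [avalAffineMap_apply] at h
  · rw [avalAffineMap_apply] at haz ⊢
    exact hS z hz a ha haz

theorem isDescentClosed_vInterval (hc : 0 < c) (hwmin : D.IsWmin c wmin) (y : V) :
    D.IsDescentClosed c (D.vInterval c wmin (wmin y y) y) := by
  intro z hz a ha haz
  rcases haz.eq_or_lt with h0 | hneg
  · rwa [sAff_of_aval_eq_zero h0]
  obtain ⟨hmem, halc, -⟩ := hwmin z
  have haR : a ∈ D.RW c (wmin z) := sepRoots_subset_RW hmem halc ⟨ha, hneg⟩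
  have hval : (wmin z * affReflection c a) (sAff c a z) = wmin z z := by
    rw [Equiv.Perm.mul_apply, affReflection_apply, sAff_involutive]
  obtain ⟨heq, hle⟩ := hwmin.apply_eq_and_bruhatLE hc
    (mul_mem hmem (D.affReflection_mem_WR c ha.1)) (hval ▸ halc)
  obtain ⟨hzy, hlezy⟩ := (hwmin.mem_vInterval_iff hc).1 hz
  refine (hwmin.mem_vInterval_iff hc).2 ⟨heq.trans (hval.trans hzy), ?_⟩
  exact (hle.tail ((bruhatStep_iff hc hmem).2 ⟨a, haR, rfl⟩)).trans hlezy

theorem IsDescentClosed.vInterval_subset (hc : 0 < c) (hwmin : D.IsWmin c wmin)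
    (hS : D.IsDescentClosed c S) (hy : y ∈ S) : D.vInterval c wmin (wmin y y) y ⊆ S := by
  obtain ⟨hmem, halc, -⟩ := hwmin y
  have inv_apply_mem : ∀ u, D.bruhatLE c u (wmin y) → u ∈ D.WR c ∧ u⁻¹ (wmin y y) ∈ S := by
    intro u hu
    induction hu using Relation.ReflTransGen.head_induction_on with
    | refl => exact ⟨hmem, by simpa using hy⟩
    | @head _ u' hstep _ ih =>
      obtain ⟨a, ha, rfl⟩ := (bruhatStep_iff hc ih.1).1 hstep
      refine ⟨mul_mem ih.1 (D.affReflection_mem_WR c ha.1.1), ?_⟩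
      rw [mul_affReflection_inv_apply]
      exact hS _ ih.2 a ha.1 (aval_nonpos_of_mem_RW (by simpa using halc) ha)
  rintro z ⟨-, heq, hle⟩
  have hz := (inv_apply_mem _ hle).2
  rwa [← heq, Equiv.Perm.inv_eq_iff_eq.2 rfl] at hz

theorem norm_apply_of_mem_W0 {w : Equiv.Perm V} (hw : w ∈ D.W0) (x : V) : ‖w x‖ = ‖x‖ := by
  induction hw using Subgroup.closure_induction generalizing x with
  | mem e he =>
    obtain ⟨α, -, he⟩ := he
    rw [he, norm_sub_inner_coroot_smul]
  | one => rfl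
  | mul u v _ _ hu hv => rw [Equiv.Perm.mul_apply, hu, hv]
  | inv u _ hu => simpa using (hu (u⁻¹ x)).symm

theorem isDescentClosed_convexHull_orbit (hc : 0 < c) (y : V) :
    D.IsDescentClosed c (convexHull ℝ ((fun w : Equiv.Perm V => w y) '' (D.W0 : Set _))) := by
  intro x hx a ha hax
  have hr : 0 ≤ (a.2 : ℝ) * c := by
    have : 0 ≤ a.2 := by rcases ha.2 with h | h <;> omega
    positivity
  have hle : ⟪x, coroot a.1⟫ ≤ aval c a x := le_add_of_nonneg_right hr
  -- `s_a x` lies on the segment from `x` to its reflection in the linear root.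
  refine sub_smul_mem_of_le (convex_convexHull ℝ _) hx ?_ hle hax
  have hlin : ∀ x, avalAffineMap c (a.1, 0) x = ⟪x, coroot a.1⟫ := by
    simp [avalAffineMap_apply, aval]
  rw [← hlin]
  refine sub_smul_mem_convexHull _ _ ?_ hx (by rw [hlin]; exact hle.trans hax)
  rintro _ ⟨w, hw, rfl⟩ -
  rw [hlin]
  let s : Equiv.Perm V := affReflection 0 (a.1, 0)
  have hs : ∀ x, s x = x - ⟪x, coroot a.1⟫ • a.1 := sAff_zero_right 0 a.1
  exact ⟨s * w, mul_mem (Subgroup.subset_closure ⟨a.1, ha.1, hs⟩) hw, hs _⟩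

theorem IsWmin.mem_vInterval_self (hc : 0 < c) (hwmin : D.IsWmin c wmin) (y : V) :
    y ∈ D.vInterval c wmin (wmin y y) y :=
  (hwmin.mem_vInterval_iff hc).2 ⟨rfl, .refl⟩

theorem IsWmin.vInterval_subset_convexHull_orbit (hc : 0 < c) (hwmin : D.IsWmin c wmin) (y : V) :
    D.vInterval c wmin (wmin y y) y ⊆
      convexHull ℝ ((fun w : Equiv.Perm V => w y) '' (D.W0 : Set _)) :=
  (isDescentClosed_convexHull_orbit hc y).vInterval_subset hc hwmin
    (subset_convexHull ℝ _ ⟨1, one_mem _, rfl⟩)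

theorem IsWmin.norm_le_of_mem_convexHull_vInterval (hc : 0 < c) (hwmin : D.IsWmin c wmin)
    (hz : z ∈ convexHull ℝ (D.vInterval c wmin (wmin y y) y)) : ‖z‖ ≤ ‖y‖ := by
  have hball : convexHull ℝ ((fun w : Equiv.Perm V => w y) '' (D.W0 : Set _)) ⊆
      Metric.closedBall 0 ‖y‖ := by
    refine convexHull_min ?_ (convex_closedBall 0 ‖y‖)
    rintro _ ⟨w, hw, rfl⟩
    simp [norm_apply_of_mem_W0 hw]
  have hsub := convexHull_min (hwmin.vInterval_subset_convexHull_orbit hc y)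
    (convex_convexHull ℝ _)
  simpa using hball (hsub hz)

theorem IsWmin.vle_of_convexHull_vInterval_eq (hc : 0 < c) (hwmin : D.IsWmin c wmin)
    (h : convexHull ℝ (D.vInterval c wmin (wmin x x) x) =
      convexHull ℝ (D.vInterval c wmin (wmin y y) y)) : D.vle c wmin x y := by
  have hx : x ∈ convexHull ℝ (D.vInterval c wmin (wmin y y) y) :=
    h ▸ subset_convexHull ℝ _ (hwmin.mem_vInterval_self hc x)
  -- The norm bound for `[x₊, x]` says that `x` has maximal norm in the common hull.
  refine (hwmin.mem_vInterval_iff hc).1 (mem_of_mem_convexHull_of_norm_le hx fun z hz => ?_)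
  exact hwmin.norm_le_of_mem_convexHull_vInterval hc (h ▸ subset_convexHull ℝ _ hz)

end DescentClosed

end RootSystemData

open RootSystemData in
/-- properties of the convex hulls of Bruhat intervals `[x₊, x]` in `V`:
(i) `Conv [y₊, y] ⊆ Conv (W₀ y)`; (ii) `Conv [x₊, x] = Conv [y₊, y] → x = y`;
(iii) `x ∈ Conv [y₊, y] → Conv [x₊, x] ⊆ Conv [y₊, y]`. -/
theorem statement4 {V : Type*} [NormedAddCommGroup V] [InnerProductSpace ℝ V]
    (D : RootSystemData V) (c : ℝ) (hc : 0 < c)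
    (wmin : V → Equiv.Perm V) (hwmin : D.IsWmin c wmin) (x y : V) :
    (convexHull ℝ (D.vInterval c wmin ((wmin y) y) y)
      ⊆ convexHull ℝ ((fun w : Equiv.Perm V => w y) '' (D.W0 : Set (Equiv.Perm V)))) ∧
    (convexHull ℝ (D.vInterval c wmin ((wmin x) x) x)
        = convexHull ℝ (D.vInterval c wmin ((wmin y) y) y) → x = y) ∧
    (x ∈ convexHull ℝ (D.vInterval c wmin ((wmin y) y) y) →
      convexHull ℝ (D.vInterval c wmin ((wmin x) x) x)
        ⊆ convexHull ℝ (D.vInterval c wmin ((wmin y) y) y)) := by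
  refine ⟨?_, fun h => ?_, fun hx => ?_⟩
  · exact convexHull_min (hwmin.vInterval_subset_convexHull_orbit hc y) (convex_convexHull ℝ _)
  · exact vle_antisymm (hwmin.vle_of_convexHull_vInterval_eq hc h)
      (hwmin.vle_of_convexHull_vInterval_eq hc h.symm)
  · have hclosed := (isDescentClosed_vInterval hc hwmin y).convexHull
    exact convexHull_min (hclosed.vInterval_subset hc hwmin hx) (convex_convexHull ℝ _)
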